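/- arXiv:1904.02772 — 3 statements merged into one kernel-verified Lean document; each statement's English description precedes it below -/
import Mathlib

section
/- Let 𝒳, 𝒴 be finite-dimensional real Hilbert spaces, P : 𝒳 → 𝒴 continuous, Λ ⊆ 𝒴, and x̄ a point with P(x̄) ∈ Λ. Define G(x) := P(x) − Λ and the extended linearized cone 𝓛̃(x̄) := {(u, ξ) ∈ 𝒳 × 𝒴 : ξ ∈ DP(x̄)(u) ∩ T_Λ(P(x̄))}. If 𝓛̃(x̄) = {(0, 0)}, then DG(x̄|0)^{-1}(0) = {0}; that is, if 0 ∈ DG(x̄|0)(u) then u = 0. -/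
open Filter Topology RealInnerProductSpace Pointwise

noncomputable section

/-- The sequential tangent cone to `Ω` at `y`. -/
def tCone {E : Type*} [NormedAddCommGroup E] [NormedSpace ℝ E] (Ω : Set E) (y : E) : Set E :=
  {d | ∃ (t : ℕ → ℝ) (dk : ℕ → E), (∀ k, 0 < t k) ∧ Tendsto t atTop (𝓝 0) ∧
        Tendsto dk atTop (𝓝 d) ∧ ∀ k, y + t k • dk k ∈ Ω}

/-- The derivable cone to `Ω` at `y`. -/
def dCone {E : Type*} [NormedAddCommGroup E] [NormedSpace ℝ E] (Ω : Set E) (y : E) : Set E :=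
  {d | ∀ t : ℕ → ℝ, (∀ k, 0 < t k) → Tendsto t atTop (𝓝 0) →
        ∃ dk : ℕ → E, Tendsto dk atTop (𝓝 d) ∧ ∀ k, y + t k • dk k ∈ Ω}

/-- The Fréchet (regular) normal cone to `Ω` at `y`. -/
def nHat {E : Type*} [NormedAddCommGroup E] [InnerProductSpace ℝ E] (Ω : Set E) (y : E) :
    Set E :=
  {ζ | ∀ ε : ℝ, 0 < ε → ∃ δ : ℝ, 0 < δ ∧ ∀ z ∈ Ω, ‖z - y‖ < δ → ⟪ζ, z - y⟫ ≤ ε * ‖z - y‖}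

/-- The limiting (Mordukhovich) normal cone to `Ω` at `y`. -/
def nLim {E : Type*} [NormedAddCommGroup E] [InnerProductSpace ℝ E] (Ω : Set E) (y : E) :
    Set E :=
  {ζ | ∃ yk ζk : ℕ → E, (∀ k, yk k ∈ Ω) ∧ Tendsto yk atTop (𝓝 y) ∧
        Tendsto ζk atTop (𝓝 ζ) ∧ ∀ k, ζk k ∈ nHat Ω (yk k)}

/-- The directional limiting normal cone to `Ω` at `y` in direction `d`. -/
def nDir {E : Type*} [NormedAddCommGroup E] [InnerProductSpace ℝ E] (Ω : Set E) (y d : E) :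
    Set E :=
  {ζ | ∃ (t : ℕ → ℝ) (dk ζk : ℕ → E), (∀ k, 0 < t k) ∧ Tendsto t atTop (𝓝 0) ∧
        Tendsto dk atTop (𝓝 d) ∧ Tendsto ζk atTop (𝓝 ζ) ∧
        ∀ k, ζk k ∈ nHat Ω (y + t k • dk k)}

/-- The Fréchet (regular) normal cone on a product of two inner product spaces,
with the product (componentwise sum) inner product. -/
def nHatP {X Y : Type*} [NormedAddCommGroup X] [InnerProductSpace ℝ X]
    [NormedAddCommGroup Y] [InnerProductSpace ℝ Y] (Ω : Set (X × Y)) (p : X × Y) :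
    Set (X × Y) :=
  {ζ | ∀ ε : ℝ, 0 < ε → ∃ δ : ℝ, 0 < δ ∧ ∀ q ∈ Ω, ‖q - p‖ < δ →
        ⟪ζ.1, q.1 - p.1⟫ + ⟪ζ.2, q.2 - p.2⟫ ≤ ε * ‖q - p‖}

/-- The directional limiting normal cone on a product of two inner product spaces. -/
def nDirP {X Y : Type*} [NormedAddCommGroup X] [InnerProductSpace ℝ X]
    [NormedAddCommGroup Y] [InnerProductSpace ℝ Y] (Ω : Set (X × Y)) (p d : X × Y) :
    Set (X × Y) :=
  {ζ | ∃ (t : ℕ → ℝ) (dk ζk : ℕ → X × Y), (∀ k, 0 < t k) ∧ Tendsto t atTop (𝓝 0) ∧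
        Tendsto dk atTop (𝓝 d) ∧ Tendsto ζk atTop (𝓝 ζ) ∧
        ∀ k, ζk k ∈ nHatP Ω (p + t k • dk k)}

/-- The graphical derivative of a single-valued map `P` at `x` in direction `u`. -/
def gDeriv {X Y : Type*} [NormedAddCommGroup X] [NormedSpace ℝ X]
    [NormedAddCommGroup Y] [NormedSpace ℝ Y] (P : X → Y) (x u : X) : Set Y :=
  {ξ | ∃ (t : ℕ → ℝ) (uk : ℕ → X), (∀ k, 0 < t k) ∧ Tendsto t atTop (𝓝 0) ∧
        Tendsto uk atTop (𝓝 u) ∧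
        Tendsto (fun k => (t k)⁻¹ • (P (x + t k • uk k) - P x)) atTop (𝓝 ξ)}

/-- The graph of the set-valued map `G(x) = P(x) - Λ`. -/
def gphG {X Y : Type*} [Sub Y] (P : X → Y) (Λ : Set Y) : Set (X × Y) :=
  {p | ∃ s ∈ Λ, p.2 = P p.1 - s}

/-- The graph of the single-valued map `P`. -/
def gphP {X Y : Type*} (P : X → Y) : Set (X × Y) := {p | p.2 = P p.1}

/-- Metric subregularity of `G(x) = P(x) - Λ` at `(xbar, 0)`. -/
def metricSubreg {X Y : Type*} [NormedAddCommGroup X] [NormedAddCommGroup Y]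
    (P : X → Y) (Λ : Set Y) (xbar : X) : Prop :=
  ∃ κ : ℝ, 0 ≤ κ ∧ ∃ U ∈ 𝓝 xbar, ∀ x ∈ U,
    Metric.infDist x {x' | P x' ∈ Λ} ≤ κ * Metric.infDist (P x) Λ

/-- `Λ` is closed near the point `y`. -/
def closedNear {Y : Type*} [TopologicalSpace Y] (Λ : Set Y) (y : Y) : Prop :=
  ∃ V ∈ 𝓝 y, IsClosed (Λ ∩ V)

/-- Proposition 2.3. -/
theorem statement2 {X Y : Type*}
    [NormedAddCommGroup X] [InnerProductSpace ℝ X] [FiniteDimensional ℝ X]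
    [NormedAddCommGroup Y] [InnerProductSpace ℝ Y] [FiniteDimensional ℝ Y]
    (P : X → Y) (Λ : Set Y) (xbar : X) (hP : Continuous P) (hfeas : P xbar ∈ Λ)
    (hL : {p : X × Y | p.2 ∈ gDeriv P xbar p.1 ∩ tCone Λ (P xbar)} = {(0, 0)}) :
    ∀ u : X, ((u, (0 : Y)) : X × Y) ∈ tCone (gphG P Λ) (xbar, 0) → u = 0 := by
  rintro u ⟨t, d, ht, ht0, hd, hmem⟩
  have hu : Tendsto (fun k => (d k).1) atTop (𝓝 u) :=
    (continuous_fst.tendsto (u, (0 : Y))).comp hd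
  have hv : Tendsto (fun k => (d k).2) atTop (𝓝 0) :=
    (continuous_snd.tendsto (u, (0 : Y))).comp hd
  set q : ℕ → Y := fun k => P (xbar + t k • (d k).1) - P xbar with hq
  have hq0 : Tendsto q atTop (𝓝 0) := by
    have h1 : Tendsto (fun k => xbar + t k • (d k).1) atTop (𝓝 xbar) := by
      simpa using tendsto_const_nhds.add (ht0.smul hu)
    simpa using ((hP.tendsto xbar).comp h1).sub_const (P xbar)
  -- rescaled step size
  set τ : ℕ → ℝ := fun k => t k + ‖q k‖ with hτ
  have hτpos : ∀ k, 0 < τ k := fun k => by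
    have := ht k
    have := norm_nonneg (q k)
    simp only [hτ]; linarith
  have hτ0 : Tendsto τ atTop (𝓝 0) := by simpa using ht0.add hq0.norm
  have hsum : ∀ k, (τ k)⁻¹ * t k + ‖(τ k)⁻¹ • q k‖ = 1 := fun k => by
    rw [norm_smul, Real.norm_of_nonneg (inv_nonneg.2 (hτpos k).le), ← mul_add]
    exact inv_mul_cancel₀ (hτpos k).ne'
  have hann : ∀ k, 0 ≤ (τ k)⁻¹ * t k := fun k =>
    mul_nonneg (inv_nonneg.2 (hτpos k).le) (ht k).le
  have hbd : ∀ k, (((τ k)⁻¹ * t k, (τ k)⁻¹ • q k) : ℝ × Y) ∈ Metric.closedBall (0 : ℝ × Y) 1 := by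
    intro k
    rw [mem_closedBall_zero_iff, Prod.norm_mk, max_le_iff, Real.norm_of_nonneg (hann k)]
    have h1 := hsum k
    have h2 := hann k
    have h3 := norm_nonneg ((τ k)⁻¹ • q k)
    constructor <;> linarith
  obtain ⟨⟨a, ξ⟩, -, φ, hφ, hlim⟩ := tendsto_subseq_of_bounded Metric.isBounded_closedBall hbd
  have hφt := hφ.tendsto_atTop
  have ha : Tendsto (fun k => (τ (φ k))⁻¹ * t (φ k)) atTop (𝓝 a) :=
    (continuous_fst.tendsto (a, ξ)).comp hlim
  have hξ : Tendsto (fun k => (τ (φ k))⁻¹ • q (φ k)) atTop (𝓝 ξ) :=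
    (continuous_snd.tendsto (a, ξ)).comp hlim
  have haξ : a + ‖ξ‖ = 1 := by
    refine tendsto_nhds_unique (ha.add hξ.norm) ?_
    simp only [hsum]
    exact tendsto_const_nhds
  have hin : ((a • u, ξ) : X × Y) ∈
      {p : X × Y | p.2 ∈ gDeriv P xbar p.1 ∩ tCone Λ (P xbar)} := by
    refine ⟨⟨fun k => τ (φ k), fun k => ((τ (φ k))⁻¹ * t (φ k)) • (d (φ k)).1,
      fun k => hτpos _, hτ0.comp hφt, ha.smul (hu.comp hφt), ?_⟩,
      ⟨fun k => τ (φ k), fun k => (τ (φ k))⁻¹ • q (φ k) - ((τ (φ k))⁻¹ * t (φ k)) • (d (φ k)).2,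
      fun k => hτpos _, hτ0.comp hφt, ?_, ?_⟩⟩
    · refine hξ.congr fun k => ?_
      rw [smul_smul, mul_inv_cancel_left₀ (hτpos _).ne']
    · simpa using hξ.sub (ha.smul (hv.comp hφt))
    · intro k
      obtain ⟨s, hs, he⟩ := hmem (φ k)
      have he' : t (φ k) • (d (φ k)).2 = P (xbar + t (φ k) • (d (φ k)).1) - s := by
        simpa using he
      have : P xbar + τ (φ k) • ((τ (φ k))⁻¹ • q (φ k) -
          ((τ (φ k))⁻¹ * t (φ k)) • (d (φ k)).2) = s := by
        rw [smul_sub, smul_smul, smul_smul, mul_inv_cancel_left₀ (hτpos _).ne',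
          mul_inv_cancel₀ (hτpos _).ne', one_smul, he']
        simp only [hq]
        abel
      rw [this]
      exact hs
  rw [hL] at hin
  have h := Prod.mk.inj (Set.mem_singleton_iff.1 hin)
  have ha1 : a = 1 := by simpa [h.2] using haξ
  simpa [ha1] using h.1
end
end

section
/- Let 𝒳, 𝒴 be finite-dimensional real Hilbert spaces, P : 𝒳 → 𝒴 continuous, and Λ ⊆ 𝒴 closed near P(x̄), with P(x̄) ∈ Λ. If the extended linearized cone satisfies 𝓛̃(x̄) = {(0, 0)}, then G(x) := P(x) − Λ is strongly metrically subregular at (x̄, 0); that is, there exist κ ≥ 0 and a neighborhood U of x̄ such that ‖x − x̄‖ ≤ κ · dist(P(x), Λ) for all x ∈ U. -/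
open Filter Topology RealInnerProductSpace Pointwise

noncomputable section

/-- Proposition 2.4: strong metric subregularity. -/
theorem statement3 {X Y : Type*}
    [NormedAddCommGroup X] [InnerProductSpace ℝ X] [FiniteDimensional ℝ X]
    [NormedAddCommGroup Y] [InnerProductSpace ℝ Y] [FiniteDimensional ℝ Y]
    (P : X → Y) (Λ : Set Y) (xbar : X) (hP : Continuous P)
    (hΛ : closedNear Λ (P xbar)) (hfeas : P xbar ∈ Λ)
    (hL : {p : X × Y | p.2 ∈ gDeriv P xbar p.1 ∩ tCone Λ (P xbar)} = {(0, 0)}) :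
    ∃ κ : ℝ, 0 ≤ κ ∧ ∃ U ∈ 𝓝 xbar, ∀ x ∈ U, ‖x - xbar‖ ≤ κ * Metric.infDist (P x) Λ := by
  by_contra hcon
  push Not at hcon
  have h1 : ∀ n : ℕ, ∃ x : X, ‖x - xbar‖ < 1 / ((n : ℝ) + 1) ∧
      ∃ s ∈ Λ, ((n : ℝ) + 1) * ‖P x - s‖ < ‖x - xbar‖ := by
    intro n
    have hn : (0 : ℝ) < (n : ℝ) + 1 := by positivity
    obtain ⟨x, hx, hlt⟩ := hcon ((n : ℝ) + 1) hn.le (Metric.ball xbar (1 / ((n : ℝ) + 1)))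
      (Metric.ball_mem_nhds _ (by positivity))
    refine ⟨x, by simpa [dist_eq_norm] using hx, ?_⟩
    have h2 : Metric.infDist (P x) Λ < ‖x - xbar‖ / ((n : ℝ) + 1) := by
      rw [lt_div_iff₀ hn]; linarith
    obtain ⟨s, hs, hd⟩ := (Metric.infDist_lt_iff ⟨_, hfeas⟩).1 h2
    refine ⟨s, hs, ?_⟩
    rw [dist_eq_norm, lt_div_iff₀ hn] at hd
    linarith
  choose x hx s hs hlt using h1
  have hxpos : ∀ n, 0 < ‖x n - xbar‖ := fun n =>
    lt_of_le_of_lt (by positivity) (hlt n)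
  have hx0 : Tendsto (fun n => ‖x n - xbar‖) atTop (𝓝 0) :=
    squeeze_zero (fun n => norm_nonneg _) (fun n => (hx n).le)
      tendsto_one_div_add_atTop_nhds_zero_nat
  have hxlim : Tendsto x atTop (𝓝 xbar) := tendsto_iff_norm_sub_tendsto_zero.2 hx0
  have hP0 : Tendsto (fun n => ‖P (x n) - P xbar‖) atTop (𝓝 0) :=
    tendsto_iff_norm_sub_tendsto_zero.1 ((hP.tendsto xbar).comp hxlim)
  obtain ⟨t, ht⟩ : ∃ t : ℕ → ℝ, ∀ n, t n = ‖x n - xbar‖ + ‖P (x n) - P xbar‖ :=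
    ⟨_, fun _ => rfl⟩
  have htpos : ∀ n, 0 < t n := fun n => by
    rw [ht]; have := hxpos n; positivity
  have ht0 : Tendsto t atTop (𝓝 0) := by
    have := hx0.add hP0
    rw [add_zero] at this
    exact this.congr fun n => (ht n).symm
  obtain ⟨w, hw⟩ : ∃ w : ℕ → X × Y,
      ∀ n, w n = ((t n)⁻¹ • (x n - xbar), (t n)⁻¹ • (P (x n) - P xbar)) := ⟨_, fun _ => rfl⟩
  have hwn : ∀ n, ‖(w n).1‖ + ‖(w n).2‖ = 1 := fun n => by
    rw [hw]
    simp only [norm_smul, norm_inv, Real.norm_of_nonneg (htpos n).le]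
    rw [← mul_add, ← ht, inv_mul_cancel₀ (htpos n).ne']
  have hwb : ∀ n, w n ∈ Metric.closedBall (0 : X × Y) 1 := fun n => by
    rw [mem_closedBall_zero_iff, Prod.norm_def]
    have := hwn n
    exact max_le (by linarith [norm_nonneg (w n).2]) (by linarith [norm_nonneg (w n).1])
  have : ProperSpace (X × Y) := FiniteDimensional.proper ℝ (X × Y)
  obtain ⟨p, -, φ, hφ, hlim⟩ := (isCompact_closedBall (0 : X × Y) 1).tendsto_subseq hwb
  have hl1 : Tendsto (fun n => (w (φ n)).1) atTop (𝓝 p.1) :=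
    (continuous_fst.tendsto p).comp hlim
  have hl2 : Tendsto (fun n => (w (φ n)).2) atTop (𝓝 p.2) :=
    (continuous_snd.tendsto p).comp hlim
  have hpn : ‖p.1‖ + ‖p.2‖ = 1 := by
    have := hl1.norm.add hl2.norm
    simp only [hwn] at this
    exact (tendsto_nhds_unique this tendsto_const_nhds)
  have htφ : Tendsto (fun n => t (φ n)) atTop (𝓝 0) := ht0.comp hφ.tendsto_atTop
  have hmem : p ∈ {p : X × Y | p.2 ∈ gDeriv P xbar p.1 ∩ tCone Λ (P xbar)} := by
    constructor
    · refine ⟨fun n => t (φ n), fun n => (w (φ n)).1, fun n => htpos _, htφ, hl1, ?_⟩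
      refine hl2.congr fun n => ?_
      simp only [hw, smul_inv_smul₀ (htpos (φ n)).ne', add_sub_cancel]
    · refine ⟨fun n => t (φ n), fun n => (t (φ n))⁻¹ • (s (φ n) - P xbar),
        fun n => htpos _, htφ, ?_, ?_⟩
      · have he : Tendsto (fun n => (t n)⁻¹ • (s n - P (x n))) atTop (𝓝 0) := by
          refine squeeze_zero_norm (fun n => ?_) tendsto_one_div_add_atTop_nhds_zero_nat
          have hn : (0 : ℝ) < (n : ℝ) + 1 := by positivity
          rw [norm_smul, norm_inv, Real.norm_of_nonneg (htpos n).le, norm_sub_rev,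
            inv_mul_eq_div, div_le_div_iff₀ (htpos n) hn, ht]
          linarith [hlt n, norm_nonneg (P (x n) - P xbar)]
        have := hl2.add (he.comp hφ.tendsto_atTop)
        rw [add_zero] at this
        refine this.congr fun n => ?_
        rw [hw]
        simp only [Function.comp, ← smul_add]
        congr 1
        abel
      · intro n
        simp only [smul_inv_smul₀ (htpos (φ n)).ne', add_sub_cancel]
        exact hs _
  rw [hL] at hmem
  have hp : p = (0, 0) := hmem
  rw [hp] at hpn
  simp at hpn
end
end

section
/- Let 𝒳, 𝒴 be finite-dimensional real Hilbert spaces, P : 𝒳 → 𝒴 a single-valued map, Λ ⊆ 𝒴, and G(x) := P(x) − Λ. Let x ∈ 𝒳, s ∈ Λ, and y := P(x) − s. If (x*, −y*) ∈ N̂_{gph G}(x, y), then x* ∈ D̂*P(x)(y*) (i.e., (x*, −y*) ∈ N̂_{gph P}(x, P(x))) and y* ∈ N̂_Λ(P(x) − y) = N̂_Λ(s). -/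
open Filter Topology RealInnerProductSpace Pointwise

noncomputable section

/-- Lemma 3.2. -/
theorem statement4 {X Y : Type*}
    [NormedAddCommGroup X] [InnerProductSpace ℝ X] [FiniteDimensional ℝ X]
    [NormedAddCommGroup Y] [InnerProductSpace ℝ Y] [FiniteDimensional ℝ Y]
    (P : X → Y) (Λ : Set Y) (x : X) (s : Y) (hs : s ∈ Λ) (y : Y) (hy : y = P x - s)
    (xs : X) (ys : Y)
    (h : ((xs, -ys) : X × Y) ∈ nHatP (gphG P Λ) (x, y)) :
    ((xs, -ys) : X × Y) ∈ nHatP (gphP P) (x, P x) ∧ ys ∈ nHat Λ (P x - y) := by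
  subst hy
  constructor
  · intro ε hε
    obtain ⟨δ, hδ, H⟩ := h ε hε
    refine ⟨δ, hδ, ?_⟩
    rintro ⟨a, b⟩ hb hq
    have hb' : b = P a := hb
    subst hb'
    have e : ((a, P a - s) : X × Y) - (x, P x - s) = (a, P a) - (x, P x) := by
      ext <;> simp
    have := H (a, P a - s) ⟨s, hs, rfl⟩ (by rw [e]; exact hq)
    rw [e] at this
    simpa using this
  · intro ε hε
    obtain ⟨δ, hδ, H⟩ := h ε hε
    refine ⟨δ, hδ, ?_⟩
    intro z hz hq
    rw [sub_sub_cancel] at hq ⊢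
    have e : ((x, P x - z) : X × Y) - (x, P x - s) = (0, -(z - s)) := by
      ext <;> simp
    have en : ‖((0, -(z - s)) : X × Y)‖ = ‖z - s‖ := by
      rw [Prod.norm_mk, norm_zero, norm_neg]
      exact max_eq_right (norm_nonneg _)
    have := H (x, P x - z) ⟨z, hz, rfl⟩ (by rw [e, en]; exact hq)
    rw [e, en] at this
    have e2 : P x - z - (P x - s) = -(z - s) := by abel
    simp only [sub_self, inner_zero_right, zero_add, e2, inner_neg_neg] at this
    exact this
end
end
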